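/- Assume: the regularity assumptions E_{p_d}[‖s_m(x;θ)‖²] < ∞ for all θ and E_{p_d}[‖s_d(x)‖²] < ∞; the projection assumptions E_{p_v}[‖v‖²] < ∞, E_{p_v}[v v^⊤] positive definite and E_{p_v}[‖v v^⊤‖_F²] < ∞; the boundary assumption s_m(x;θ) p_d(x) → 0 as ‖x‖ → ∞ for all θ; Θ compact; the model family well-specified and identifiable (p_d = p_m(·;θ*), and p_m(·;θ) ≠ p_m(·;θ*) whenever θ ≠ θ*); all densities strictly positive; and the Lipschitz assumptions ‖∇_x s_m(x;θ₁) − ∇_x s_m(x;θ₂)‖_F ≤ L₁(x)‖θ₁−θ₂‖₂, ‖s_m(x;θ₁)s_m(x;θ₁)^⊤ − s_m(x;θ₂)s_m(x;θ₂)^⊤‖_F ≤ L₂(x)‖θ₁−θ₂‖₂ with E_{p_d}[L₁²] < ∞, E_{p_d}[L₂²] < ∞. Then for every fixed M ∈ ℕ⁺, any sequence of estimators θ̂_{N,M} ∈ argmin_{θ∈Θ} Ĵ(θ; x_1^N, v_{11}^{NM}) converges in probability to θ* as N → ∞. (Theorem 2 of the paper: consistency of sliced score matching.) -/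

import Mathlib

open MeasureTheory Filter RealInnerProductSpace

noncomputable section

/-- The score function `∇ₓ log p(x)` of a density `p` on `ℝ^D`. -/
def score {D : ℕ} (p : EuclideanSpace ℝ (Fin D) → ℝ) (x : EuclideanSpace ℝ (Fin D)) :
    EuclideanSpace ℝ (Fin D) :=
  gradient (fun y => Real.log (p y)) x

/-- The sliced score matching integrand
`f(θ; x, v) = vᵀ ∇ₓ s_m(x;θ) v + ½ (vᵀ s_m(x;θ))²`. -/
def ssmF {D K : ℕ} (pm : EuclideanSpace ℝ (Fin K) → EuclideanSpace ℝ (Fin D) → ℝ)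
    (θ : EuclideanSpace ℝ (Fin K)) (x v : EuclideanSpace ℝ (Fin D)) : ℝ :=
  ⟪v, fderiv ℝ (score (pm θ)) x v⟫ + (1/2) * ⟪v, score (pm θ) x⟫ ^ 2

/-!
Integration by parts against the data density turns the population excess loss of a vector field
`s` over the data score `∇ log p` into `½ 𝔼 ⟪v, s(x) - ∇ log p(x)⟫²`. Since `𝔼[v vᵀ]` is positive
definite this is positive unless `s` is the data score, and a normalized density is determined by
its score. Near a parameter `θ₀ ≠ θ*` the Lipschitz bounds give the excess loss an integrable
minorant with positive mean, so by the law of large numbers the probability that some parameter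
near `θ₀` beats `θ*` on the sample tends to `0`; compactness makes finitely many such
neighbourhoods cover the parameters at distance at least `ε` from `θ*`.
-/

section LawOfLargeNumbers

open ProbabilityTheory
open scoped Topology

lemma tendsto_measure_zero_mono {ι : Type*} {l : Filter ι} {Ω : ι → Type*}
    [∀ i, MeasurableSpace (Ω i)] {P : ∀ i, Measure (Ω i)} {s t : ∀ i, Set (Ω i)}
    (hst : ∀ i, s i ⊆ t i) (ht : Tendsto (fun i => P i (t i)) l (𝓝 0)) :
    Tendsto (fun i => P i (s i)) l (𝓝 0) :=
  tendsto_of_tendsto_of_tendsto_of_le_of_le tendsto_const_nhds ht (fun _ => zero_le)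
    fun i => measure_mono (hst i)

lemma tendsto_measure_preimage_zero {ι : Type*} {l : Filter ι} {Ω Ω' : ι → Type*}
    [∀ i, MeasurableSpace (Ω i)] [∀ i, MeasurableSpace (Ω' i)] {P : ∀ i, Measure (Ω i)}
    {P' : ∀ i, Measure (Ω' i)} {f : ∀ i, Ω i → Ω' i} {s : ∀ i, Set (Ω' i)}
    (hf : ∀ i, MeasurePreserving (f i) (P i) (P' i))
    (hs : Tendsto (fun i => P' i (s i)) l (𝓝 0)) :
    Tendsto (fun i => P i (f i ⁻¹' s i)) l (𝓝 0) :=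
  tendsto_of_tendsto_of_tendsto_of_le_of_le tendsto_const_nhds hs (fun _ => zero_le) fun i =>
    (Measure.le_map_apply (hf i).aemeasurable _).trans_eq (by rw [(hf i).map_eq])

variable {Ω : Type*} [MeasurableSpace Ω] (P : Measure Ω) [IsProbabilityMeasure P]

lemma measurePreserving_infinitePi_restrict_fin (N : ℕ) :
    MeasurePreserving (fun (ω : ℕ → Ω) (i : Fin N) => ω i)
      (Measure.infinitePi fun _ : ℕ => P) (Measure.pi fun _ : Fin N => P) := by
  refine ⟨by fun_prop, ?_⟩
  have hindep : iIndepFun (fun (i : Fin N) (ω : ℕ → Ω) => ω i) (Measure.infinitePi fun _ => P) :=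
    (iIndepFun_infinitePi (P := fun _ : ℕ => P) (X := fun _ => id)
      fun _ => measurable_id).precomp Fin.val_injective
  refine ((iIndepFun_iff_map_fun_eq_pi_map fun i : Fin N =>
    (measurable_pi_apply (i : ℕ)).aemeasurable).1 hindep).trans ?_
  congr 1 with i : 1
  exact (measurePreserving_eval_infinitePi (fun _ : ℕ => P) i).map_eq

variable {P}
variable {E : Type*} [NormedAddCommGroup E] [NormedSpace ℝ E] [CompleteSpace E]
  [MeasurableSpace E] [BorelSpace E]

lemma ae_tendsto_infinitePi_average {Y : Ω → E} (hY : Integrable Y P) :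
    ∀ᵐ ω ∂(Measure.infinitePi fun _ : ℕ => P),
      Tendsto (fun N : ℕ => (N : ℝ)⁻¹ • ∑ i : Fin N, Y (ω i)) atTop (𝓝 (∫ y, Y y ∂P)) := by
  have heval (i : ℕ) := measurePreserving_eval_infinitePi (fun _ : ℕ => P) i
  have hindep : iIndepFun (fun (i : ℕ) (ω : ℕ → Ω) => Y (ω i)) (Measure.infinitePi fun _ => P) :=
    (iIndepFun_infinitePi (P := fun _ : ℕ => P) (X := fun _ => id) fun _ => measurable_id).comp₀
      (fun _ => Y) (fun i => (heval i).aemeasurable)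
      fun i => by simpa only [id, (heval i).map_eq] using hY.aemeasurable
  have hlaw (i : ℕ) : IdentDistrib (fun ω : ℕ → Ω => Y (ω i)) Y (Measure.infinitePi fun _ => P) P :=
    IdentDistrib.comp_of_aemeasurable (g := id) (u := Y)
      ⟨(heval i).aemeasurable, aemeasurable_id, (heval i).map_eq.trans Measure.map_id.symm⟩
      ((heval i).map_eq.symm ▸ hY.aemeasurable)
  have hslln := strong_law_ae (fun (i : ℕ) (ω : ℕ → Ω) => Y (ω i))
    ((heval 0).integrable_comp_of_integrable hY) (fun i j hij => hindep.indepFun hij)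
    fun i => (hlaw i).trans (hlaw 0).symm
  rw [(hlaw 0).integral_eq] at hslln
  simpa only [Finset.sum_range] using hslln

theorem tendsto_pi_norm_average_sub_integral {Y : Ω → E} (hY : Integrable Y P) {δ : ℝ}
    (hδ : 0 < δ) :
    Tendsto (fun N : ℕ => (Measure.pi fun _ : Fin N => P)
      {ω | δ ≤ ‖(N : ℝ)⁻¹ • ∑ i, Y (ω i) - ∫ y, Y y ∂P‖}) atTop (𝓝 0) := by
  have hmeas (N : ℕ) : AEStronglyMeasurable (fun ω : Fin N → Ω => (N : ℝ)⁻¹ • ∑ i, Y (ω i))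
      (Measure.pi fun _ => P) :=
    (Finset.aestronglyMeasurable_fun_sum _ fun i _ => hY.1.comp_measurePreserving
      (measurePreserving_eval (fun _ : Fin N => P) i)).const_smul _
  have hrestrict := measurePreserving_infinitePi_restrict_fin P
  have hconv := tendstoInMeasure_iff_norm.1 (tendstoInMeasure_of_tendsto_ae
    (fun N => (hmeas N).comp_measurePreserving (hrestrict N))
    (ae_tendsto_infinitePi_average hY)) δ hδ
  refine hconv.congr fun N => (hrestrict N).measure_preimage ?_
  exact nullMeasurableSet_le aemeasurable_const
    ((hmeas N).sub aestronglyMeasurable_const).norm.aemeasurable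

theorem tendsto_pi_sum_nonpos {Z : Ω → ℝ} (hZ : Integrable Z P) (hpos : 0 < ∫ z, Z z ∂P) :
    Tendsto (fun N : ℕ => (Measure.pi fun _ : Fin N => P) {ω | ∑ i, Z (ω i) ≤ 0})
      atTop (𝓝 0) := by
  refine tendsto_measure_zero_mono (fun N ω (hω : ∑ i, Z (ω i) ≤ 0) => ?_)
    (tendsto_pi_norm_average_sub_integral hZ hpos)
  have havg : (N : ℝ)⁻¹ • ∑ i, Z (ω i) ≤ 0 :=
    mul_nonpos_of_nonneg_of_nonpos (by positivity) hω
  exact (le_sub_self_iff _ |>.2 havg).trans (neg_sub _ (∫ z, Z z ∂P) ▸ neg_le_abs _)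

variable {X : Type*} [PseudoMetricSpace X] {C : Set X} {Y : X → Ω → ℝ} {B : Ω → ℝ}

-- The minorant `Y θ₀ - r * |B|` of `Y θ` over `ball θ₀ r` keeps a positive mean for small `r`.
lemma exists_nhdsWithin_tendsto_pi_exists_sum_nonpos (hB : Integrable B P)
    (hlip : ∀ θ₁ ∈ C, ∀ θ₂ ∈ C, ∀ z, |Y θ₁ z - Y θ₂ z| ≤ B z * dist θ₁ θ₂)
    {θ₀ : X} (hθ₀ : θ₀ ∈ C) (hY : Integrable (Y θ₀) P) (hpos : 0 < ∫ z, Y θ₀ z ∂P) :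
    ∃ U ∈ 𝓝[C] θ₀, Tendsto (fun N : ℕ => (Measure.pi fun _ : Fin N => P)
      {ω | ∃ θ ∈ U, ∑ i, Y θ (ω i) ≤ 0}) atTop (𝓝 0) := by
  obtain ⟨r, hr, hrB⟩ := exists_pos_mul_lt hpos (∫ z, |B z| ∂P)
  have hmean : 0 < ∫ z, (Y θ₀ z - |B z| * r) ∂P := by
    rw [integral_sub hY (hB.abs.mul_const r), integral_mul_const]
    exact sub_pos.2 hrB
  refine ⟨C ∩ Metric.ball θ₀ r, inter_mem_nhdsWithin C (Metric.ball_mem_nhds θ₀ hr),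
    tendsto_measure_zero_mono ?_ (tendsto_pi_sum_nonpos (hY.sub (hB.abs.mul_const r)) hmean)⟩
  rintro N ω ⟨θ, ⟨hθ, hdist⟩, hsum⟩
  refine (Finset.sum_le_sum fun i _ => ?_).trans hsum
  have hminorant : |Y θ₀ (ω i) - Y θ (ω i)| ≤ |B (ω i)| * r := calc
    _ ≤ B (ω i) * dist θ₀ θ := hlip θ₀ hθ₀ θ hθ (ω i)
    _ ≤ |B (ω i)| * r := by
      gcongr
      · exact le_abs_self _
      · exact (Metric.mem_ball'.1 hdist).le
  simp only [Pi.sub_apply]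
  linarith [le_abs_self (Y θ₀ (ω i) - Y θ (ω i))]

theorem tendsto_pi_exists_sum_nonpos (hC : IsCompact C) (hB : Integrable B P)
    (hlip : ∀ θ₁ ∈ C, ∀ θ₂ ∈ C, ∀ z, |Y θ₁ z - Y θ₂ z| ≤ B z * dist θ₁ θ₂)
    (hY : ∀ θ ∈ C, Integrable (Y θ) P) (hpos : ∀ θ ∈ C, 0 < ∫ z, Y θ z ∂P) :
    Tendsto (fun N : ℕ => (Measure.pi fun _ : Fin N => P)
      {ω | ∃ θ ∈ C, ∑ i, Y θ (ω i) ≤ 0}) atTop (𝓝 0) := by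
  refine hC.induction_on (p := fun s => Tendsto (fun N : ℕ => (Measure.pi fun _ : Fin N => P)
    {ω | ∃ θ ∈ s, ∑ i, Y θ (ω i) ≤ 0}) atTop (𝓝 0)) (by simp) ?mono ?union ?nhds
  case mono =>
    exact fun s t hst =>
      tendsto_measure_zero_mono fun N ω ⟨θ, hθ, hsum⟩ => ⟨θ, hst hθ, hsum⟩
  case union =>
    intro s t hs ht
    refine tendsto_of_tendsto_of_tendsto_of_le_of_le tendsto_const_nhds
      (by simpa only [add_zero] using hs.add ht) (fun _ => zero_le)
      fun N => (measure_mono ?_).trans (measure_union_le _ _)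
    rintro ω ⟨θ, hθ | hθ, hsum⟩
    exacts [.inl ⟨θ, hθ, hsum⟩, .inr ⟨θ, hθ, hsum⟩]
  case nhds =>
    exact fun θ hθ =>
      exists_nhdsWithin_tendsto_pi_exists_sum_nonpos hB hlip hθ (hY θ hθ) (hpos θ hθ)

-- `Y θ` plays the role of the excess loss `ℓ θ - ℓ θstar`.
theorem tendsto_pi_exists_le_dist_sum_nonpos {Θ : Set X} {θstar : X} (hΘ : IsCompact Θ)
    (hB : Integrable B P)
    (hlip : ∀ θ₁ ∈ Θ, ∀ θ₂ ∈ Θ, ∀ z, |Y θ₁ z - Y θ₂ z| ≤ B z * dist θ₁ θ₂)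
    (hY : ∀ θ ∈ Θ, Integrable (Y θ) P) (hpos : ∀ θ ∈ Θ, θ ≠ θstar → 0 < ∫ z, Y θ z ∂P)
    {ε : ℝ} (hε : 0 < ε) :
    Tendsto (fun N : ℕ => (Measure.pi fun _ : Fin N => P)
      {ω | ∃ θ ∈ Θ, ε ≤ dist θ θstar ∧ ∑ i, Y θ (ω i) ≤ 0}) atTop (𝓝 0) := by
  have hfar : IsCompact (Θ ∩ {θ | ε ≤ dist θ θstar}) :=
    hΘ.inter_right (isClosed_le continuous_const (by fun_prop))
  have hne (θ : X) (hθ : ε ≤ dist θ θstar) : θ ≠ θstar := by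
    rintro rfl
    exact (hε.trans_le hθ).ne' (dist_self θ)
  simpa only [Set.mem_inter_iff, Set.mem_ofPred_eq, and_assoc] using
    tendsto_pi_exists_sum_nonpos hfar hB (fun θ₁ h₁ θ₂ h₂ => hlip θ₁ h₁.1 θ₂ h₂.1)
      (fun θ hθ => hY θ hθ.1) fun θ hθ => hpos θ hθ.1 (hne θ hθ.2)

end LawOfLargeNumbers

lemma measurePreserving_pairSamples {ι κ E F : Type*} [Fintype ι] [Fintype κ] [MeasurableSpace E]
    [MeasurableSpace F] (μ : Measure E) (ν : Measure F) [SigmaFinite μ] [IsProbabilityMeasure ν] :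
    MeasurePreserving (fun (ω : (ι → E) × (ι × κ → F)) i => (ω.1 i, fun j => ω.2 (i, j)))
      ((Measure.pi fun _ : ι => μ).prod (Measure.pi fun _ : ι × κ => ν))
      (Measure.pi fun _ : ι => μ.prod (Measure.pi fun _ : κ => ν)) := by
  have hcurry : MeasurePreserving (MeasurableEquiv.curry ι κ F)
      (Measure.pi fun _ : ι × κ => ν) (Measure.pi fun _ : ι => Measure.pi fun _ : κ => ν) := by
    refine ⟨MeasurableEquiv.measurable _, ?_⟩
    simpa only [Measure.infinitePi_eq_pi] using
      Measure.infinitePi_map_curry fun (_ : ι) (_ : κ) => ν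
  exact (measurePreserving_arrowProdEquivProdArrow E (κ → F) ι (fun _ => μ)
    fun _ => Measure.pi fun _ => ν).symm.comp ((MeasurePreserving.id _).prod hcurry)

section DensityMeasure

variable {α : Type*} [MeasureSpace α] {p : α → ℝ}

/-- The measure with Lebesgue density `p`, i.e. the distribution of the data when `p` is a
probability density. Negative values of `p` are truncated to `0`. -/
def densityMeasure (p : α → ℝ) : Measure α :=
  volume.withDensity fun x => ENNReal.ofReal (p x)

lemma integrable_densityMeasure_iff (hp : Measurable p) (hnonneg : ∀ x, 0 ≤ p x) {g : α → ℝ} :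
    Integrable g (densityMeasure p) ↔ Integrable fun x => p x * g x := by
  rw [densityMeasure, integrable_withDensity_iff_integrable_smul' (by fun_prop) (by simp)]
  simp only [ENNReal.toReal_ofReal (hnonneg _), smul_eq_mul]

lemma integral_densityMeasure (hp : Measurable p) (hnonneg : ∀ x, 0 ≤ p x) (g : α → ℝ) :
    ∫ x, g x ∂densityMeasure p = ∫ x, p x * g x := by
  rw [densityMeasure, integral_withDensity_eq_integral_toReal_smul (by fun_prop) (by simp)]
  simp only [ENNReal.toReal_ofReal (hnonneg _), smul_eq_mul]

lemma isOpenPosMeasure_densityMeasure [TopologicalSpace α]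
    [(volume : Measure α).IsOpenPosMeasure] (hp : Measurable p) (hpos : ∀ x, 0 < p x) :
    (densityMeasure p).IsOpenPosMeasure :=
  (withDensity_absolutelyContinuous' (by fun_prop)
    (Eventually.of_forall fun x => (ENNReal.ofReal_pos.2 (hpos x)).ne')).isOpenPosMeasure

lemma isProbabilityMeasure_densityMeasure (hnonneg : ∀ x, 0 ≤ p x) (hprob : ∫ x, p x = 1) :
    IsProbabilityMeasure (densityMeasure p) := by
  have hint : Integrable p := .of_integral_ne_zero (by simp [hprob])
  refine ⟨?_⟩
  rw [densityMeasure, withDensity_apply _ .univ, Measure.restrict_univ,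
    ← ofReal_integral_eq_lintegral_ofReal hint (Eventually.of_forall hnonneg), hprob,
    ENNReal.ofReal_one]

-- Only `|L|`, not `L` itself, inherits measurability from `p * L ^ 2`.
lemma integrable_abs_of_integrable_mul_sq [IsFiniteMeasure (densityMeasure p)] (hp : Measurable p)
    (hnonneg : ∀ x, 0 ≤ p x) {L : α → ℝ} (hL : Integrable fun x => p x * L x ^ 2) :
    Integrable (fun x => |L x|) (densityMeasure p) := by
  rw [← integrable_densityMeasure_iff hp hnonneg] at hL
  have hmeas : AEStronglyMeasurable (fun x => |L x|) (densityMeasure p) := by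
    simpa only [Function.comp_def, Real.sqrt_sq_eq_abs] using
      Real.continuous_sqrt.comp_aestronglyMeasurable hL.1
  refine MemLp.integrable one_le_two ((memLp_two_iff_integrable_sq hmeas).2 ?_)
  simpa only [sq_abs] using hL

end DensityMeasure

section Frobenius

open Matrix
open scoped Matrix.Norms.Frobenius

variable {m n : Type*} [Fintype m] [Fintype n]

lemma frobenius_norm_eq_sqrt (A : Matrix m n ℝ) : ‖A‖ = √(∑ i, ∑ j, A i j ^ 2) := by
  simp [frobenius_norm_def, Real.sqrt_eq_rpow]

lemma frobenius_norm_le_abs_mul_dist {X : Type*} [SeminormedAddCommGroup X] {A : Matrix m n ℝ}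
    {c : ℝ} {x y : X} (hA : √(∑ i, ∑ j, A i j ^ 2) ≤ c * ‖x - y‖) : ‖A‖ ≤ |c| * dist x y := by
  rw [frobenius_norm_eq_sqrt, dist_eq_norm]
  exact hA.trans (by gcongr; exact le_abs_self c)

lemma norm_toEuclideanLin_le_frobenius [DecidableEq n] (A : Matrix m n ℝ)
    (v : EuclideanSpace ℝ n) : ‖toEuclideanLin A v‖ ≤ ‖A‖ * ‖v‖ := by
  have h := frobenius_norm_mul A (replicateCol Unit (WithLp.ofLp v))
  rwa [← replicateCol_mulVec, frobenius_norm_replicateCol, frobenius_norm_replicateCol] at h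

lemma abs_inner_toEuclideanLin_self_le [DecidableEq n] (A : Matrix n n ℝ)
    (v : EuclideanSpace ℝ n) : |⟪v, toEuclideanLin A v⟫| ≤ ‖A‖ * ‖v‖ ^ 2 := calc
  |⟪v, toEuclideanLin A v⟫| ≤ ‖v‖ * ‖toEuclideanLin A v‖ := abs_real_inner_le_norm _ _
  _ ≤ ‖v‖ * (‖A‖ * ‖v‖) := by gcongr; exact norm_toEuclideanLin_le_frobenius A v
  _ = ‖A‖ * ‖v‖ ^ 2 := by ring

lemma inner_toEuclideanLin_vecMulVec_self [DecidableEq n] (s v : EuclideanSpace ℝ n) :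
    ⟪v, toEuclideanLin (vecMulVec s s) v⟫ = ⟪v, s⟫ ^ 2 := by
  have h : toEuclideanLin (vecMulVec s s) v = ⟪v, s⟫ • s := by
    ext i
    simp [vecMulVec_mulVec, EuclideanSpace.inner_eq_star_dotProduct, mul_comm]
  rw [h, real_inner_smul_right, sq]

end Frobenius

section Score

variable {D : ℕ} {p q : EuclideanSpace ℝ (Fin D) → ℝ}

lemma inner_score (p : EuclideanSpace ℝ (Fin D) → ℝ) (x v : EuclideanSpace ℝ (Fin D)) :
    ⟪v, score p x⟫ = fderiv ℝ (fun y => Real.log (p y)) x v := by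
  rw [real_inner_comm, score, inner_gradient_left]

lemma fderiv_eq_mul_inner_score {x : EuclideanSpace ℝ (Fin D)} (hp : DifferentiableAt ℝ p x)
    (hx : p x ≠ 0) (v : EuclideanSpace ℝ (Fin D)) : fderiv ℝ p x v = p x * ⟪v, score p x⟫ := by
  rw [inner_score, fderiv.log hp hx]
  simp [hx]

lemma contDiff_score (hp : ContDiff ℝ 2 p) (hne : ∀ x, p x ≠ 0) : ContDiff ℝ 1 (score p) :=
  (InnerProductSpace.toDual ℝ (EuclideanSpace ℝ (Fin D))).symm.contDiff.comp
    ((hp.log hne).fderiv_right one_add_one_eq_two.le)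

-- Equal scores make `log q - log p` constant, and normalization forces that constant to be `0`.
theorem eq_of_score_eq (hp : Differentiable ℝ p) (hq : Differentiable ℝ q) (hp_pos : ∀ x, 0 < p x)
    (hq_pos : ∀ x, 0 < q x) (hint : ∫ x, q x = ∫ x, p x) (hint_ne : ∫ x, p x ≠ 0)
    (hscore : score q = score p) : q = p := by
  have hlogp := hp.log fun x => (hp_pos x).ne'
  have hlogq := hq.log fun x => (hq_pos x).ne'
  have hconst (x) : Real.log (q x) - Real.log (p x) = Real.log (q 0) - Real.log (p 0) := by
    refine is_const_of_fderiv_eq_zero (𝕜 := ℝ) (hlogq.sub hlogp) (fun y => ?_) x 0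
    ext v
    rw [fderiv_sub (hlogq y) (hlogp y)]
    simp [← inner_score, hscore]
  set c := Real.exp (Real.log (q 0) - Real.log (p 0))
  have hmul (x) : q x = c * p x := by
    rw [← div_eq_iff (hp_pos x).ne', ← Real.exp_log (div_pos (hq_pos x) (hp_pos x)),
      Real.log_div (hq_pos x).ne' (hp_pos x).ne', hconst x]
  have hc : c = 1 := by
    simpa [hmul, integral_const_mul, hint_ne] using hint
  ext x
  rw [hmul x, hc, one_mul]

theorem integral_fderiv_densityMeasure (hp : Differentiable ℝ p) (hp_pos : ∀ x, 0 < p x)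
    {g : EuclideanSpace ℝ (Fin D) → ℝ} (hg : Differentiable ℝ g) (v : EuclideanSpace ℝ (Fin D))
    (hg_int : Integrable g (densityMeasure p))
    (hg'_int : Integrable (fun x => fderiv ℝ g x v) (densityMeasure p))
    (hscore_int : Integrable (fun x => ⟪v, score p x⟫ * g x) (densityMeasure p)) :
    ∫ x, fderiv ℝ g x v ∂densityMeasure p = -∫ x, ⟪v, score p x⟫ * g x ∂densityMeasure p := by
  have hmeas : Measurable p := hp.continuous.measurable
  have hnonneg (x) : 0 ≤ p x := (hp_pos x).le
  have hderiv (x) : p x * (⟪v, score p x⟫ * g x) = fderiv ℝ p x v * g x := by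
    rw [fderiv_eq_mul_inner_score (hp x) (hp_pos x).ne', mul_assoc]
  simp only [integrable_densityMeasure_iff hmeas hnonneg, hderiv] at hg_int hg'_int hscore_int
  simp only [integral_densityMeasure hmeas hnonneg, hderiv]
  exact integral_mul_fderiv_eq_neg_fderiv_mul_of_integrable hscore_int hg'_int hg_int
    (fun x _ => hp x) fun x _ => hg x

end Score

section SlicedLoss

open Matrix
open scoped Matrix.Norms.Frobenius

variable {D : ℕ} {p : EuclideanSpace ℝ (Fin D) → ℝ}
  {s t : EuclideanSpace ℝ (Fin D) → EuclideanSpace ℝ (Fin D)}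
  {a b : EuclideanSpace ℝ (Fin D) → ℝ} {μ ν : Measure (EuclideanSpace ℝ (Fin D))}

/-- The sliced score matching integrand `vᵀ ∇s(x) v + ½ (vᵀ s(x))²` of an arbitrary vector field
`s`; the function `ssmF` is its value at the model score `s = s_m(·;θ)`. -/
def slicedLoss (s : EuclideanSpace ℝ (Fin D) → EuclideanSpace ℝ (Fin D))
    (x v : EuclideanSpace ℝ (Fin D)) : ℝ :=
  ⟪v, fderiv ℝ s x v⟫ + (1 / 2) * ⟪v, s x⟫ ^ 2

/-- The Jacobian matrix `(∂ⱼ sᵢ(x))ᵢⱼ` of a vector field `s`, used to measure `∇s(x)` in the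
Frobenius norm. -/
def jacobianMatrix (s : EuclideanSpace ℝ (Fin D) → EuclideanSpace ℝ (Fin D))
    (x : EuclideanSpace ℝ (Fin D)) : Matrix (Fin D) (Fin D) ℝ :=
  .of fun i j => fderiv ℝ s x (EuclideanSpace.single j 1) i

lemma toEuclideanLin_jacobianMatrix (s : EuclideanSpace ℝ (Fin D) → EuclideanSpace ℝ (Fin D))
    (x v : EuclideanSpace ℝ (Fin D)) :
    toEuclideanLin (jacobianMatrix s x) v = fderiv ℝ s x v := by
  have h : toEuclideanLin (jacobianMatrix s x) = (fderiv ℝ s x : _ →ₗ[ℝ] _) := by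
    refine (EuclideanSpace.basisFun (Fin D) ℝ).toBasis.ext fun j => ?_
    ext i
    simp [jacobianMatrix]
  exact LinearMap.congr_fun h v

lemma abs_inner_fderiv_sub_le (s t : EuclideanSpace ℝ (Fin D) → EuclideanSpace ℝ (Fin D))
    (x v : EuclideanSpace ℝ (Fin D)) :
    |⟪v, fderiv ℝ s x v⟫ - ⟪v, fderiv ℝ t x v⟫|
      ≤ ‖jacobianMatrix s x - jacobianMatrix t x‖ * ‖v‖ ^ 2 := by
  simpa only [map_sub, LinearMap.sub_apply, inner_sub_right, toEuclideanLin_jacobianMatrix] using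
    abs_inner_toEuclideanLin_self_le (jacobianMatrix s x - jacobianMatrix t x) v

lemma abs_inner_sq_sub_le (y z v : EuclideanSpace ℝ (Fin D)) :
    |⟪v, y⟫ ^ 2 - ⟪v, z⟫ ^ 2| ≤ ‖vecMulVec y y - vecMulVec z z‖ * ‖v‖ ^ 2 := by
  simpa only [map_sub, LinearMap.sub_apply, inner_sub_right,
    inner_toEuclideanLin_vecMulVec_self] using
    abs_inner_toEuclideanLin_self_le (vecMulVec y y - vecMulVec z z) v

lemma abs_slicedLoss_sub_le {α β : ℝ} {x : EuclideanSpace ℝ (Fin D)}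
    (hα : ‖jacobianMatrix s x - jacobianMatrix t x‖ ≤ α)
    (hβ : ‖vecMulVec (s x) (s x) - vecMulVec (t x) (t x)‖ ≤ β) (v : EuclideanSpace ℝ (Fin D)) :
    |slicedLoss s x v - slicedLoss t x v| ≤ (α + β / 2) * ‖v‖ ^ 2 := calc
  |slicedLoss s x v - slicedLoss t x v|
    = |(⟪v, fderiv ℝ s x v⟫ - ⟪v, fderiv ℝ t x v⟫)
        + (1 / 2) * (⟪v, s x⟫ ^ 2 - ⟪v, t x⟫ ^ 2)| := by
      rw [slicedLoss, slicedLoss]; ring_nf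
  _ ≤ |⟪v, fderiv ℝ s x v⟫ - ⟪v, fderiv ℝ t x v⟫| + (1 / 2) * |⟪v, s x⟫ ^ 2 - ⟪v, t x⟫ ^ 2| := by
      refine (abs_add_le _ _).trans_eq ?_
      rw [abs_mul (1 / 2 : ℝ), abs_of_pos (one_half_pos (α := ℝ))]
  _ ≤ α * ‖v‖ ^ 2 + (1 / 2) * (β * ‖v‖ ^ 2) := by
      gcongr
      · exact (abs_inner_fderiv_sub_le s t x v).trans (by gcongr)
      · exact (abs_inner_sq_sub_le (s x) (t x) v).trans (by gcongr)
  _ = (α + β / 2) * ‖v‖ ^ 2 := by ring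

lemma continuous_slicedLoss (hs : ContDiff ℝ 1 s) :
    Continuous fun z : EuclideanSpace ℝ (Fin D) × EuclideanSpace ℝ (Fin D) =>
      slicedLoss s z.1 z.2 := by
  unfold slicedLoss
  fun_prop

lemma integrable_slicedLoss_sub (hs : ContDiff ℝ 1 s) (ht : ContDiff ℝ 1 t)
    (ha : Integrable a μ) (hb : Integrable b μ) (hν : Integrable (fun v => ‖v‖ ^ 2) ν)
    (hjac : ∀ x, ‖jacobianMatrix s x - jacobianMatrix t x‖ ≤ a x)
    (houter : ∀ x, ‖vecMulVec (s x) (s x) - vecMulVec (t x) (t x)‖ ≤ b x) :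
    Integrable (fun z : EuclideanSpace ℝ (Fin D) × EuclideanSpace ℝ (Fin D) =>
      slicedLoss s z.1 z.2 - slicedLoss t z.1 z.2) (μ.prod ν) :=
  ((ha.add (hb.div_const 2)).mul_prod hν).mono'
    ((continuous_slicedLoss hs).sub (continuous_slicedLoss ht)).aestronglyMeasurable
    (Eventually.of_forall fun z => abs_slicedLoss_sub_le (hjac z.1) (houter z.1) z.2)

lemma integrable_inner_fderiv_sub (hs : ContDiff ℝ 1 s) (ht : ContDiff ℝ 1 t)
    (ha : Integrable a μ) (hjac : ∀ x, ‖jacobianMatrix s x - jacobianMatrix t x‖ ≤ a x)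
    (v : EuclideanSpace ℝ (Fin D)) :
    Integrable (fun x => ⟪v, fderiv ℝ s x v⟫ - ⟪v, fderiv ℝ t x v⟫) μ := by
  refine (ha.mul_const (‖v‖ ^ 2)).mono' (Continuous.aestronglyMeasurable (by fun_prop))
    (Eventually.of_forall fun x => (abs_inner_fderiv_sub_le s t x v).trans ?_)
  gcongr
  exact hjac x

-- Stein's identity trades the second-order part of the excess loss for `-⟪v, ∇ log p⟫ ⟪v, u⟫`,
-- `u = s - ∇ log p`, which completes the square.
theorem integral_slicedLoss_sub_slicedLoss_score [IsFiniteMeasure (densityMeasure p)]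
    (hp : Differentiable ℝ p) (hp_pos : ∀ x, 0 < p x) (hs : Differentiable ℝ s)
    (hscore : Differentiable ℝ (score p)) (hs_sq : MemLp s 2 (densityMeasure p))
    (hscore_sq : MemLp (score p) 2 (densityMeasure p)) (v : EuclideanSpace ℝ (Fin D))
    (hderiv_int : Integrable (fun x => ⟪v, fderiv ℝ s x v⟫ - ⟪v, fderiv ℝ (score p) x v⟫)
      (densityMeasure p)) :
    ∫ x, (slicedLoss s x v - slicedLoss (score p) x v) ∂densityMeasure p
      = (1 / 2) * ∫ x, ⟪v, s x - score p x⟫ ^ 2 ∂densityMeasure p := by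
  set g : EuclideanSpace ℝ (Fin D) → ℝ := fun x => ⟪v, s x - score p x⟫
  have hg_sq : MemLp g 2 (densityMeasure p) := (hs_sq.sub hscore_sq).const_inner v
  have hg : Differentiable ℝ g := (differentiable_const v).inner ℝ (hs.sub hscore)
  have hg' (x) : fderiv ℝ g x v = ⟪v, fderiv ℝ s x v⟫ - ⟪v, fderiv ℝ (score p) x v⟫ := by
    change fderiv ℝ (fun y => ⟪v, s y - score p y⟫) x v = _
    rw [fderiv_inner_apply ℝ (differentiableAt_const v) ((hs x).fun_sub (hscore x)),
      fderiv_fun_sub (hs x) (hscore x)]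
    simp [inner_sub_right]
  have hcross : Integrable (fun x => ⟪v, score p x⟫ * g x) (densityMeasure p) :=
    (hscore_sq.const_inner v).integrable_mul hg_sq
  have hsquare : Integrable (fun x => (1 / 2) * g x ^ 2) (densityMeasure p) :=
    hg_sq.integrable_sq.const_mul _
  have hrest : Integrable (fun x => ⟪v, score p x⟫ * g x + (1 / 2) * g x ^ 2) (densityMeasure p) :=
    hcross.add hsquare
  simp only [← hg'] at hderiv_int
  have hexpand (x) : slicedLoss s x v - slicedLoss (score p) x v
      = fderiv ℝ g x v + (⟪v, score p x⟫ * g x + (1 / 2) * g x ^ 2) := by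
    rw [hg', slicedLoss, slicedLoss, show g x = ⟪v, s x⟫ - ⟪v, score p x⟫ from inner_sub_right ..]
    ring
  simp only [hexpand]
  rw [integral_add hderiv_int hrest, integral_add hcross hsquare,
    integral_fderiv_densityMeasure hp hp_pos hg v (hg_sq.integrable one_le_two) hderiv_int hcross,
    neg_add_cancel_left, integral_const_mul]

end SlicedLoss

section PositiveDefinite

variable {α E : Type*} [MeasurableSpace α] [NormedAddCommGroup E] [InnerProductSpace ℝ E]
  [MeasurableSpace E] [BorelSpace E] [SecondCountableTopology E]
  {μ : Measure α} {ν : Measure E} {u : α → E}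

lemma integrable_prod_inner_sq (hu : MemLp u 2 μ) (hν : Integrable (fun v => ‖v‖ ^ 2) ν) :
    Integrable (fun z : α × E => ⟪z.2, u z.1⟫ ^ 2) (μ.prod ν) := by
  have hmeas : AEStronglyMeasurable (fun z : α × E => ⟪z.2, u z.1⟫ ^ 2) (μ.prod ν) :=
    (measurable_snd.aestronglyMeasurable.inner hu.1.comp_fst).pow 2
  refine (hu.norm.integrable_sq.mul_prod hν).mono' hmeas (Eventually.of_forall fun z => ?_)
  rw [Real.norm_eq_abs, abs_pow, ← mul_pow, mul_comm ‖u z.1‖]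
  gcongr
  exact abs_real_inner_le_norm z.2 (u z.1)

theorem integral_integral_inner_sq_pos [SFinite μ] [SFinite ν] (hu : MemLp u 2 μ)
    (hu_ne : ¬ u =ᵐ[μ] 0) (hν : Integrable (fun v => ‖v‖ ^ 2) ν)
    (hν_posdef : ∀ w : E, w ≠ 0 → 0 < ∫ v, ⟪v, w⟫ ^ 2 ∂ν) :
    0 < ∫ v, ∫ x, ⟪v, u x⟫ ^ 2 ∂μ ∂ν := by
  have hint := integrable_prod_inner_sq hu hν
  have hnonneg (x : α) : 0 ≤ ∫ v, ⟪v, u x⟫ ^ 2 ∂ν := integral_nonneg fun v => sq_nonneg _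
  rw [← integral_integral_swap (f := fun x v => ⟪v, u x⟫ ^ 2) hint]
  refine (integral_nonneg hnonneg).lt_of_ne' fun hzero => hu_ne ?_
  filter_upwards [(integral_eq_zero_iff_of_nonneg hnonneg hint.integral_prod_left).1 hzero]
    with x hx
  by_contra hux
  exact (hν_posdef (u x) hux).ne' hx

end PositiveDefinite

section RepeatedProjections

variable {κ E F : Type*} [Fintype κ] [MeasurableSpace E] [MeasurableSpace F]
  {μ : Measure E} {ν : Measure F} [SFinite μ] [IsProbabilityMeasure ν] {f : E × F → ℝ}

lemma measurePreserving_fst_eval_snd (j : κ) :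
    MeasurePreserving (fun z : E × (κ → F) => (z.1, z.2 j))
      (μ.prod (Measure.pi fun _ : κ => ν)) (μ.prod ν) :=
  (MeasurePreserving.id μ).prod (measurePreserving_eval (fun _ : κ => ν) j)

lemma integrable_sum_eval_snd (hf : Integrable f (μ.prod ν)) :
    Integrable (fun z : E × (κ → F) => ∑ j, f (z.1, z.2 j))
      (μ.prod (Measure.pi fun _ : κ => ν)) :=
  integrable_finsetSum _ fun j _ =>
    (measurePreserving_fst_eval_snd j).integrable_comp_of_integrable hf

lemma integral_sum_eval_snd (hf : Integrable f (μ.prod ν)) :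
    ∫ z : E × (κ → F), ∑ j, f (z.1, z.2 j) ∂(μ.prod (Measure.pi fun _ : κ => ν))
      = Fintype.card κ * ∫ z, f z ∂(μ.prod ν) := by
  have heval (j : κ) : ∫ z : E × (κ → F), f (z.1, z.2 j) ∂(μ.prod (Measure.pi fun _ : κ => ν))
      = ∫ z, f z ∂(μ.prod ν) := by
    have hmp := measurePreserving_fst_eval_snd (μ := μ) (ν := ν) j
    rw [← hmp.map_eq, integral_map hmp.aemeasurable (hmp.map_eq ▸ hf.1)]
  have hint (j : κ) : Integrable (fun z : E × (κ → F) => f (z.1, z.2 j))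
      (μ.prod (Measure.pi fun _ : κ => ν)) :=
    (measurePreserving_fst_eval_snd j).integrable_comp_of_integrable hf
  rw [integral_finsetSum _ fun j _ => hint j]
  simp [heval]

end RepeatedProjections

section Consistency

open Matrix
open scoped Matrix.Norms.Frobenius

variable {D : ℕ} {p q : EuclideanSpace ℝ (Fin D) → ℝ}
  {s t : EuclideanSpace ℝ (Fin D) → EuclideanSpace ℝ (Fin D)}
  {ν : Measure (EuclideanSpace ℝ (Fin D))}

/-- A strictly positive, twice continuously differentiable probability density on `ℝ^D`, as the
members of the model family are required to be. -/
structure IsPosC2Density (p : EuclideanSpace ℝ (Fin D) → ℝ) : Prop where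
  pos : ∀ x, 0 < p x
  contDiff : ContDiff ℝ 2 p
  integral_eq_one : ∫ x, p x = 1

namespace IsPosC2Density

lemma differentiable (hp : IsPosC2Density p) : Differentiable ℝ p :=
  hp.contDiff.differentiable two_ne_zero

lemma contDiff_score (hp : IsPosC2Density p) : ContDiff ℝ 1 (score p) :=
  _root_.contDiff_score hp.contDiff fun x => (hp.pos x).ne'

lemma isProbabilityMeasure (hp : IsPosC2Density p) : IsProbabilityMeasure (densityMeasure p) :=
  isProbabilityMeasure_densityMeasure (fun x => (hp.pos x).le) hp.integral_eq_one

lemma score_ne (hp : IsPosC2Density p) (hq : IsPosC2Density q) (hne : q ≠ p) :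
    score q ≠ score p :=
  mt (eq_of_score_eq hp.differentiable hq.differentiable hp.pos hq.pos
    (hq.integral_eq_one.trans hp.integral_eq_one.symm)
    (hp.integral_eq_one.trans_ne one_ne_zero)) hne

lemma integrable_abs_of_integrable_mul_sq (hp : IsPosC2Density p)
    {L : EuclideanSpace ℝ (Fin D) → ℝ} (hL : Integrable fun x => p x * L x ^ 2) :
    Integrable (fun x => |L x|) (densityMeasure p) :=
  have := hp.isProbabilityMeasure
  _root_.integrable_abs_of_integrable_mul_sq hp.contDiff.continuous.measurable
    (fun x => (hp.pos x).le) hL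

lemma memLp_score_two (hp : IsPosC2Density p) (hq : IsPosC2Density q)
    (hint : Integrable fun x => p x * ‖score q x‖ ^ 2) :
    MemLp (score q) 2 (densityMeasure p) := by
  rw [memLp_two_iff_integrable_sq_norm hq.contDiff_score.continuous.aestronglyMeasurable,
    integrable_densityMeasure_iff hp.contDiff.continuous.measurable fun x => (hp.pos x).le]
  exact hint

theorem integral_prod_slicedLoss_sub_pos [SFinite ν] (hp : IsPosC2Density p) (hs : ContDiff ℝ 1 s)
    (hs_ne : s ≠ score p) (hs_sq : MemLp s 2 (densityMeasure p))
    (hscore_sq : MemLp (score p) 2 (densityMeasure p))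
    (hν : Integrable (fun v => ‖v‖ ^ 2) ν)
    (hν_posdef : ∀ w : EuclideanSpace ℝ (Fin D), w ≠ 0 → 0 < ∫ v, ⟪v, w⟫ ^ 2 ∂ν)
    (hderiv_int : ∀ v, Integrable
      (fun x => ⟪v, fderiv ℝ s x v⟫ - ⟪v, fderiv ℝ (score p) x v⟫) (densityMeasure p))
    (hloss_int : Integrable (fun z : EuclideanSpace ℝ (Fin D) × EuclideanSpace ℝ (Fin D) =>
      slicedLoss s z.1 z.2 - slicedLoss (score p) z.1 z.2) ((densityMeasure p).prod ν)) :
    0 < ∫ z, (slicedLoss s z.1 z.2 - slicedLoss (score p) z.1 z.2)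
      ∂((densityMeasure p).prod ν) := by
  have := hp.isProbabilityMeasure
  have := isOpenPosMeasure_densityMeasure hp.contDiff.continuous.measurable hp.pos
  have hscore := hp.contDiff_score
  have hfield_ne : ¬ s - score p =ᵐ[densityMeasure p] 0 :=
    mt ((hs.sub hscore).continuous.ae_eq_iff_eq _ continuous_const).1 (sub_ne_zero.2 hs_ne)
  rw [integral_prod_symm _ hloss_int]
  simp only [integral_slicedLoss_sub_slicedLoss_score hp.differentiable hp.pos
    (hs.differentiable one_ne_zero) (hscore.differentiable one_ne_zero) hs_sq hscore_sq _
    (hderiv_int _), integral_const_mul]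
  exact mul_pos one_half_pos
    (integral_integral_inner_sq_pos (hs_sq.sub hscore_sq) hfield_ne hν hν_posdef)

end IsPosC2Density

variable {N M : ℕ} {a b : EuclideanSpace ℝ (Fin D) → ℝ}

/-- The empirical sliced score matching objective `Ĵ` of a vector field `s` on the sample
`ω = (x_1^N, v_{11}^{NM})`. -/
def ssmObjective (s : EuclideanSpace ℝ (Fin D) → EuclideanSpace ℝ (Fin D))
    (ω : (Fin N → EuclideanSpace ℝ (Fin D)) × (Fin N × Fin M → EuclideanSpace ℝ (Fin D))) : ℝ :=
  (1 / ((N : ℝ) * (M : ℝ))) * ∑ i : Fin N, ∑ j : Fin M, slicedLoss s (ω.1 i) (ω.2 (i, j))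

/-- The excess of the sliced loss of `s` over that of `t`, summed over the projection vectors
`z.2` attached to one data point `z.1`. -/
def excessLoss (s t : EuclideanSpace ℝ (Fin D) → EuclideanSpace ℝ (Fin D))
    (z : EuclideanSpace ℝ (Fin D) × (Fin M → EuclideanSpace ℝ (Fin D))) : ℝ :=
  ∑ j, (slicedLoss s z.1 (z.2 j) - slicedLoss t z.1 (z.2 j))

lemma sum_excessLoss_nonpos_of_ssmObjective_le (hM : M ≠ 0)
    {ω : (Fin N → EuclideanSpace ℝ (Fin D)) × (Fin N × Fin M → EuclideanSpace ℝ (Fin D))}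
    (hle : ssmObjective s ω ≤ ssmObjective t ω) :
    ∑ i, excessLoss s t (ω.1 i, fun j => ω.2 (i, j)) ≤ 0 := by
  obtain rfl | hN := Nat.eq_zero_or_pos N
  · exact Finset.sum_empty.le
  have hscale : (0 : ℝ) < 1 / (N * M) := by positivity
  simp only [excessLoss, Finset.sum_sub_distrib]
  exact sub_nonpos.2 (le_of_mul_le_mul_left hle hscale)

lemma abs_excessLoss_sub_excessLoss_le
    {s₁ s₂ : EuclideanSpace ℝ (Fin D) → EuclideanSpace ℝ (Fin D)} {α β r : ℝ}
    {z : EuclideanSpace ℝ (Fin D) × (Fin M → EuclideanSpace ℝ (Fin D))}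
    (hα : ‖jacobianMatrix s₁ z.1 - jacobianMatrix s₂ z.1‖ ≤ α * r)
    (hβ : ‖vecMulVec (s₁ z.1) (s₁ z.1) - vecMulVec (s₂ z.1) (s₂ z.1)‖ ≤ β * r)
    (t : EuclideanSpace ℝ (Fin D) → EuclideanSpace ℝ (Fin D)) :
    |excessLoss s₁ t z - excessLoss s₂ t z| ≤ (∑ j, (α + β / 2) * ‖z.2 j‖ ^ 2) * r := by
  rw [excessLoss, excessLoss, ← Finset.sum_sub_distrib, Finset.sum_mul]
  refine (Finset.abs_sum_le_sum_abs _ _).trans (Finset.sum_le_sum fun j _ => ?_)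
  rw [sub_sub_sub_cancel_right]
  exact (abs_slicedLoss_sub_le hα hβ (z.2 j)).trans_eq (by ring)

lemma integrable_excessLoss {μ : Measure (EuclideanSpace ℝ (Fin D))} [SFinite μ]
    [IsProbabilityMeasure ν] (hs : ContDiff ℝ 1 s) (ht : ContDiff ℝ 1 t) (ha : Integrable a μ)
    (hb : Integrable b μ) (hν : Integrable (fun v => ‖v‖ ^ 2) ν)
    (hjac : ∀ x, ‖jacobianMatrix s x - jacobianMatrix t x‖ ≤ a x)
    (houter : ∀ x, ‖vecMulVec (s x) (s x) - vecMulVec (t x) (t x)‖ ≤ b x) :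
    Integrable (excessLoss s t) (μ.prod (Measure.pi fun _ : Fin M => ν)) :=
  integrable_sum_eval_snd (integrable_slicedLoss_sub hs ht ha hb hν hjac houter)

theorem IsPosC2Density.integral_excessLoss_score_pos [IsProbabilityMeasure ν]
    (hp : IsPosC2Density p) (hq : IsPosC2Density q) (hne : q ≠ p) (hM : M ≠ 0)
    (hq_sq : MemLp (score q) 2 (densityMeasure p)) (hp_sq : MemLp (score p) 2 (densityMeasure p))
    (hν : Integrable (fun v => ‖v‖ ^ 2) ν)
    (hν_posdef : ∀ w : EuclideanSpace ℝ (Fin D), w ≠ 0 → 0 < ∫ v, ⟪v, w⟫ ^ 2 ∂ν)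
    (ha : Integrable a (densityMeasure p)) (hb : Integrable b (densityMeasure p))
    (hjac : ∀ x, ‖jacobianMatrix (score q) x - jacobianMatrix (score p) x‖ ≤ a x)
    (houter : ∀ x, ‖vecMulVec (score q x) (score q x) - vecMulVec (score p x) (score p x)‖ ≤ b x) :
    0 < ∫ z, excessLoss (score q) (score p) z
      ∂((densityMeasure p).prod (Measure.pi fun _ : Fin M => ν)) := by
  have := hp.isProbabilityMeasure
  have hcard : (0 : ℝ) < Fintype.card (Fin M) := by simpa [Nat.pos_iff_ne_zero] using hM
  have hloss_int := integrable_slicedLoss_sub hq.contDiff_score hp.contDiff_score ha hb hν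
    hjac houter
  have hmean := hp.integral_prod_slicedLoss_sub_pos hq.contDiff_score (hp.score_ne hq hne)
    hq_sq hp_sq hν hν_posdef
    (integrable_inner_fderiv_sub hq.contDiff_score hp.contDiff_score ha hjac) hloss_int
  exact (mul_pos hcard hmean).trans_eq (integral_sum_eval_snd hloss_int).symm

theorem ssm_estimator_consistency_general {X : Type*} [PseudoMetricSpace X] {Θ : Set X}
    (hΘ : IsCompact Θ) {θstar : X} (hθstar : θstar ∈ Θ) (hM : M ≠ 0)
    {pm : X → EuclideanSpace ℝ (Fin D) → ℝ} (hpm : ∀ θ ∈ Θ, IsPosC2Density (pm θ))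
    (hident : ∀ θ ∈ Θ, pm θ = pm θstar → θ = θstar)
    (hscore : ∀ θ ∈ Θ, MemLp (score (pm θ)) 2 (densityMeasure (pm θstar)))
    [IsProbabilityMeasure ν] (hν : Integrable (fun v => ‖v‖ ^ 2) ν)
    (hν_posdef : ∀ w : EuclideanSpace ℝ (Fin D), w ≠ 0 → 0 < ∫ v, ⟪v, w⟫ ^ 2 ∂ν)
    {L₁ L₂ : EuclideanSpace ℝ (Fin D) → ℝ} (hL₁ : Integrable L₁ (densityMeasure (pm θstar)))
    (hL₂ : Integrable L₂ (densityMeasure (pm θstar)))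
    (hjac : ∀ θ₁ ∈ Θ, ∀ θ₂ ∈ Θ, ∀ x,
      ‖jacobianMatrix (score (pm θ₁)) x - jacobianMatrix (score (pm θ₂)) x‖ ≤ L₁ x * dist θ₁ θ₂)
    (houter : ∀ θ₁ ∈ Θ, ∀ θ₂ ∈ Θ, ∀ x,
      ‖vecMulVec (score (pm θ₁) x) (score (pm θ₁) x)
          - vecMulVec (score (pm θ₂) x) (score (pm θ₂) x)‖ ≤ L₂ x * dist θ₁ θ₂)
    {T : (N : ℕ) →
      (Fin N → EuclideanSpace ℝ (Fin D)) × (Fin N × Fin M → EuclideanSpace ℝ (Fin D)) → X}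
    (hT_mem : ∀ N ω, T N ω ∈ Θ)
    (hT_le : ∀ N ω, ssmObjective (score (pm (T N ω))) ω ≤ ssmObjective (score (pm θstar)) ω)
    {ε : ℝ} (hε : 0 < ε) :
    Tendsto (fun N : ℕ => ((Measure.pi fun _ : Fin N => densityMeasure (pm θstar)).prod
      (Measure.pi fun _ : Fin N × Fin M => ν)) {ω | ε ≤ dist (T N ω) θstar}) atTop (nhds 0) := by
  have := (hpm θstar hθstar).isProbabilityMeasure
  have hint (θ) (hθ : θ ∈ Θ) : Integrable (excessLoss (score (pm θ)) (score (pm θstar)))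
      ((densityMeasure (pm θstar)).prod (Measure.pi fun _ : Fin M => ν)) :=
    integrable_excessLoss (hpm θ hθ).contDiff_score (hpm θstar hθstar).contDiff_score
      (hL₁.mul_const _) (hL₂.mul_const _) hν (hjac θ hθ θstar hθstar) (houter θ hθ θstar hθstar)
  have hpos (θ) (hθ : θ ∈ Θ) (hne : θ ≠ θstar) :
      0 < ∫ z, excessLoss (score (pm θ)) (score (pm θstar)) z
        ∂((densityMeasure (pm θstar)).prod (Measure.pi fun _ : Fin M => ν)) :=
    (hpm θstar hθstar).integral_excessLoss_score_pos (hpm θ hθ) (mt (hident θ hθ) hne) hM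
      (hscore θ hθ) (hscore θstar hθstar) hν hν_posdef (hL₁.mul_const _) (hL₂.mul_const _)
      (hjac θ hθ θstar hθstar) (houter θ hθ θstar hθstar)
  have hfar := tendsto_pi_exists_le_dist_sum_nonpos hΘ
    (integrable_sum_eval_snd ((hL₁.add (hL₂.div_const 2)).mul_prod hν))
    (fun θ₁ h₁ θ₂ h₂ z => abs_excessLoss_sub_excessLoss_le (hjac θ₁ h₁ θ₂ h₂ z.1)
      (houter θ₁ h₁ θ₂ h₂ z.1) (score (pm θstar))) hint hpos hε
  refine tendsto_measure_zero_mono (fun N ω hω => ?_)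
    (tendsto_measure_preimage_zero
      (fun N => measurePreserving_pairSamples (densityMeasure (pm θstar)) ν) hfar)
  exact ⟨T N ω, hT_mem N ω, hω, sum_excessLoss_nonpos_of_ssmObjective_le hM (hT_le N ω)⟩

end Consistency

/-- **Theorem 2 of the paper (consistency of sliced score matching).** Under the
regularity, projection, boundary, compactness, identifiability, positivity and Lipschitz
assumptions, for every fixed `M ∈ ℕ⁺` any sequence of minimizers
`θ̂_{N,M} ∈ argmin_{θ∈Θ} Ĵ(θ; x_1^N, v_11^{NM})` converges in probability to `θ*`. -/
theorem ssm_estimator_consistency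
    (D K M : ℕ) (hD : 1 ≤ D) (hM : 1 ≤ M)
    (Θ : Set (EuclideanSpace ℝ (Fin K)))
    (pd : EuclideanSpace ℝ (Fin D) → ℝ)
    (pm : EuclideanSpace ℝ (Fin K) → EuclideanSpace ℝ (Fin D) → ℝ)
    (θstar : EuclideanSpace ℝ (Fin K)) (hθstar : θstar ∈ Θ)
    (μd μv : Measure (EuclideanSpace ℝ (Fin D)))
    [IsProbabilityMeasure μd] [IsProbabilityMeasure μv]
    -- data density: positive, differentiable; μd is the data distribution
    (hpd_pos : ∀ x, 0 < pd x) (hpd_diff : Differentiable ℝ pd)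
    (hμd : μd = volume.withDensity (fun x => ENNReal.ofReal (pd x)))
    -- model densities: positive, twice continuously differentiable, integrate to one
    (hpm_pos : ∀ θ x, 0 < pm θ x) (hpm_smooth : ∀ θ, ContDiff ℝ 2 (pm θ))
    (hpm_prob : ∀ θ, ∫ x, pm θ x = 1)
    -- regularity of scores: E_{p_d}[‖s_m(x;θ)‖²] < ∞ and E_{p_d}[‖s_d(x)‖²] < ∞
    (hreg_m : ∀ θ, Integrable (fun x => pd x * ‖score (pm θ) x‖ ^ 2))
    (hreg_d : Integrable (fun x => pd x * ‖score pd x‖ ^ 2))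
    -- projection vectors: E[‖v‖²] < ∞, E[v vᵀ] ≻ 0 and E[‖v vᵀ‖_F²] < ∞
    (hv_mom : Integrable (fun v => ‖v‖ ^ 2) μv)
    (hv_posdef : ∀ w : EuclideanSpace ℝ (Fin D), w ≠ 0 → 0 < ∫ v, ⟪v, w⟫ ^ 2 ∂μv)
    (hv4 : Integrable (fun v => ∑ i, ∑ j, (v i * v j) ^ 2) μv)
    -- boundary condition: s_m(x;θ) p_d(x) → 0 as ‖x‖ → ∞
    (hbound : ∀ θ, Tendsto (fun x => pd x • score (pm θ) x)
      (Bornology.cobounded (EuclideanSpace ℝ (Fin D))) (nhds 0))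
    -- compactness of the parameter space
    (hΘ : IsCompact Θ)
    -- well-specification and identifiability
    (hws : pd = pm θstar)
    (hident : ∀ θ ∈ Θ, pm θ = pm θstar → θ = θstar)
    -- Lipschitz assumptions with square-integrable constants
    (L1 L2 : EuclideanSpace ℝ (Fin D) → ℝ)
    (hL1 : ∀ θ₁ ∈ Θ, ∀ θ₂ ∈ Θ, ∀ x,
      Real.sqrt (∑ i, ∑ j, ((fderiv ℝ (score (pm θ₁)) x (EuclideanSpace.single j 1)) i
          - (fderiv ℝ (score (pm θ₂)) x (EuclideanSpace.single j 1)) i) ^ 2)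
        ≤ L1 x * ‖θ₁ - θ₂‖)
    (hL2 : ∀ θ₁ ∈ Θ, ∀ θ₂ ∈ Θ, ∀ x,
      Real.sqrt (∑ i, ∑ j, (score (pm θ₁) x i * score (pm θ₁) x j
          - score (pm θ₂) x i * score (pm θ₂) x j) ^ 2)
        ≤ L2 x * ‖θ₁ - θ₂‖)
    (hL1int : Integrable (fun x => pd x * L1 x ^ 2))
    (hL2int : Integrable (fun x => pd x * L2 x ^ 2))
    -- a sequence of measurable estimators attaining the minimum of the empirical objective
    (T : (N : ℕ) → ((Fin N → EuclideanSpace ℝ (Fin D)) × (Fin N × Fin M → EuclideanSpace ℝ (Fin D)))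
      → EuclideanSpace ℝ (Fin K))
    (hT_meas : ∀ N, Measurable (T N))
    (hT_argmin : ∀ N ω, T N ω ∈ Θ ∧ ∀ θ ∈ Θ,
      (1 / ((N : ℝ) * (M : ℝ))) * ∑ i : Fin N, ∑ j : Fin M, ssmF pm (T N ω) (ω.1 i) (ω.2 (i, j))
        ≤ (1 / ((N : ℝ) * (M : ℝ))) * ∑ i : Fin N, ∑ j : Fin M, ssmF pm θ (ω.1 i) (ω.2 (i, j))) :
    -- conclusion: θ̂_{N,M} → θ* in probability as N → ∞
    ∀ ε > 0, Tendsto (fun N : ℕ =>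
      ((Measure.pi fun _ : Fin N => μd).prod (Measure.pi fun _ : Fin N × Fin M => μv))
        {ω | ε ≤ dist (T N ω) θstar}) atTop (nhds 0) := by
  subst hws hμd
  have hpm (θ) : IsPosC2Density (pm θ) := ⟨hpm_pos θ, hpm_smooth θ, hpm_prob θ⟩
  exact fun ε hε => ssm_estimator_consistency_general hΘ hθstar (Nat.one_le_iff_ne_zero.1 hM)
    (fun θ _ => hpm θ) hident (fun θ _ => (hpm θstar).memLp_score_two (hpm θ) (hreg_m θ))
    hv_mom hv_posdef ((hpm θstar).integrable_abs_of_integrable_mul_sq hL1int)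
    ((hpm θstar).integrable_abs_of_integrable_mul_sq hL2int)
    (fun θ₁ h₁ θ₂ h₂ x => frobenius_norm_le_abs_mul_dist (hL1 θ₁ h₁ θ₂ h₂ x))
    (fun θ₁ h₁ θ₂ h₂ x => frobenius_norm_le_abs_mul_dist (hL2 θ₁ h₁ θ₂ h₂ x))
    (fun N ω => (hT_argmin N ω).1) (fun N ω => (hT_argmin N ω).2 θstar hθstar) hε
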